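/- arXiv:2408.11620 — 2 statements merged into one kernel-verified Lean document; each statement's English description precedes it below -/
import Mathlib

section
/- Let p ∈ Δ*_m, q ∈ Δ*_n, c ∈ ℝ^{m×n}, and let α > 0, β > 0. Let (u,v) ∈ ℝ^m × ℝ^n be the maximizer of the dual functional D(u,v) = (1/α)⟨𝟙 − e^{−αu}, p⟩ + ⟨v, q⟩ − (1/β)⟨e^{β(u𝟙ᵀ + 𝟙vᵀ − c)}, π^ref⟩ + 1/β (exponentials entrywise). Then ‖u‖_∞ ≤ (β/(α+β)) · (4‖log p‖_∞/β + ‖c‖_osc). -/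
open Finset Filter Topology ENNReal

noncomputable section

/-- Frobenius inner product `⟨c, π⟩ = ∑_{ij} c_ij π_ij`. -/
def frob {m n : ℕ} (c π : Matrix (Fin m) (Fin n) ℝ) : ℝ := ∑ i, ∑ j, c i j * π i j

/-- Row sums `π𝟙`. -/
def rowSum {m n : ℕ} (π : Matrix (Fin m) (Fin n) ℝ) : Fin m → ℝ := fun i => ∑ j, π i j

/-- Column sums `πᵀ𝟙`. -/
def colSum {m n : ℕ} (π : Matrix (Fin m) (Fin n) ℝ) : Fin n → ℝ := fun j => ∑ i, π i j

/-- Kullback–Leibler divergence between nonnegative vectors. -/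
def KLvec {k : ℕ} (a b : Fin k → ℝ) : ℝ := ∑ i, (a i * Real.log (a i / b i) - a i + b i)

/-- Kullback–Leibler divergence between nonnegative matrices. -/
def KLmat {m n : ℕ} (a b : Matrix (Fin m) (Fin n) ℝ) : ℝ :=
  ∑ i, ∑ j, (a i j * Real.log (a i j / b i j) - a i j + b i j)

/-- The tipless simplex `Δ*_k`: strictly positive entries summing to 1. -/
def simplexPos (k : ℕ) : Set (Fin k → ℝ) := {p | (∀ i, 0 < p i) ∧ ∑ i, p i = 1}

/-- The simplex `Δ_k`: nonnegative entries summing to 1. -/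
def simplexNN (k : ℕ) : Set (Fin k → ℝ) := {p | (∀ i, 0 ≤ p i) ∧ ∑ i, p i = 1}

/-- Transport plans `Γ(p, q)`. -/
def Gamma {m n : ℕ} (p : Fin m → ℝ) (q : Fin n → ℝ) : Set (Matrix (Fin m) (Fin n) ℝ) :=
  {π | (∀ i j, 0 ≤ π i j) ∧ rowSum π = p ∧ colSum π = q}

/-- Half-relaxed plans `Γ(*, q)`. -/
def GammaStar {m n : ℕ} (q : Fin n → ℝ) : Set (Matrix (Fin m) (Fin n) ℝ) :=
  {π | (∀ i j, 0 ≤ π i j) ∧ colSum π = q}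

/-- Reference plan `π^ref = (mn)⁻¹ 𝟙𝟙ᵀ`. -/
def piRef (m n : ℕ) : Matrix (Fin m) (Fin n) ℝ := fun _ _ => 1 / (m * n)

/-- Optimal transport value `OT(p,q)`. -/
def OTval {m n : ℕ} (c : Matrix (Fin m) (Fin n) ℝ) (p : Fin m → ℝ) (q : Fin n → ℝ) : ℝ :=
  ⨅ π : Gamma p q, frob c π.1

/-- Entropic OT objective `⟨c,π⟩ + β⁻¹ KL(π|π^ref)`. -/
def eotObj {m n : ℕ} (c : Matrix (Fin m) (Fin n) ℝ) (β : ℝ) (π : Matrix (Fin m) (Fin n) ℝ) : ℝ :=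
  frob c π + β⁻¹ * KLmat π (piRef m n)

/-- Entropic OT value `EOT_β(p,q)`. -/
def eotVal {m n : ℕ} (c : Matrix (Fin m) (Fin n) ℝ) (β : ℝ) (p : Fin m → ℝ) (q : Fin n → ℝ) : ℝ :=
  ⨅ π : Gamma p q, eotObj c β π.1

/-- Gibbs kernel `K = e^{-βc}` (entrywise). -/
def gibbs {m n : ℕ} (c : Matrix (Fin m) (Fin n) ℝ) (β : ℝ) : Matrix (Fin m) (Fin n) ℝ :=
  fun i j => Real.exp (-(β * c i j))

/-- Annealed Sinkhorn scaling vectors `(a_t, b_t)`: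
`b_0 = 𝟙`, `a_{t+1} = p ⊘ (K_t b_t)`, `b_{t+1} = q ⊘ (K_{t+1}ᵀ a_{t+1})`, `K_t = e^{-β_t c}`. -/
def sinkAB {m n : ℕ} (p : Fin m → ℝ) (q : Fin n → ℝ) (c : Matrix (Fin m) (Fin n) ℝ)
    (β : ℕ → ℝ) : ℕ → (Fin m → ℝ) × (Fin n → ℝ)
  | 0 => (fun _ => 1, fun _ => 1)
  | t + 1 =>
    let prev := sinkAB p q c β t
    let a : Fin m → ℝ := fun i => p i / ∑ j, gibbs c (β t) i j * prev.2 j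
    (a, fun j => q j / ∑ i, gibbs c (β (t + 1)) i j * a i)

/-- Annealed Sinkhorn primal iterate `π_t = diag(a_t) K_t diag(b_t)`. -/
def sinkPlan {m n : ℕ} (p : Fin m → ℝ) (q : Fin n → ℝ) (c : Matrix (Fin m) (Fin n) ℝ)
    (β : ℕ → ℝ) (t : ℕ) : Matrix (Fin m) (Fin n) ℝ :=
  fun i j => (sinkAB p q c β t).1 i * gibbs c (β t) i j * (sinkAB p q c β t).2 j

/-- `ℓ¹` norm of a vector. -/
def l1vec {k : ℕ} (a : Fin k → ℝ) : ℝ := ∑ i, |a i|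

/-- Oscillation semi-norm `‖c‖_osc = max c - min c`. -/
def cOsc {m n : ℕ} (c : Matrix (Fin m) (Fin n) ℝ) : ℝ :=
  (⨆ i, ⨆ j, c i j) - ⨅ i, ⨅ j, c i j

/-- `‖log p‖_∞`. -/
def logSup {k : ℕ} (p : Fin k → ℝ) : ℝ := ⨆ i, |Real.log (p i)|

/-- The rounding ("projection") procedure of Altschuler et al. (Algorithm 3). -/
def roundPlan {m n : ℕ} (p : Fin m → ℝ) (q : Fin n → ℝ) (π : Matrix (Fin m) (Fin n) ℝ) :
    Matrix (Fin m) (Fin n) ℝ :=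
  let π' : Matrix (Fin m) (Fin n) ℝ := fun i j => min 1 (p i / rowSum π i) * π i j
  let π'' : Matrix (Fin m) (Fin n) ℝ := fun i j => π' i j * min 1 (q j / colSum π' j)
  fun i j => π'' i j +
    (p i - rowSum π'' i) * (q j - colSum π'' j) / l1vec (fun i' => p i' - rowSum π'' i')

/-- Relaxed entropic objective `F^reg(π) = ⟨c,π⟩ + α⁻¹ KL(π𝟙|p) + β⁻¹ KL(π|π^ref)`. -/
def Freg {m n : ℕ} (c : Matrix (Fin m) (Fin n) ℝ) (p : Fin m → ℝ) (α β : ℝ)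
    (π : Matrix (Fin m) (Fin n) ℝ) : ℝ :=
  frob c π + α⁻¹ * KLvec (rowSum π) p + β⁻¹ * KLmat π (piRef m n)

/-- Dual functional for the relaxed entropic problem. -/
def dualFun {m n : ℕ} (p : Fin m → ℝ) (q : Fin n → ℝ) (c : Matrix (Fin m) (Fin n) ℝ)
    (α β : ℝ) (u : Fin m → ℝ) (v : Fin n → ℝ) : ℝ :=
  α⁻¹ * (∑ i, (1 - Real.exp (-(α * u i))) * p i) + ∑ j, v j * q j
    - β⁻¹ * (∑ i, ∑ j, Real.exp (β * (u i + v j - c i j)) * piRef m n i j) + β⁻¹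

/-- Dual functional of entropic OT. -/
def eotDual {m n : ℕ} (p : Fin m → ℝ) (q : Fin n → ℝ) (c : Matrix (Fin m) (Fin n) ℝ)
    (β : ℝ) (u : Fin m → ℝ) (v : Fin n → ℝ) : ℝ :=
  ∑ i, p i * u i + ∑ j, q j * v j
    + β⁻¹ * (1 - ∑ i, ∑ j, piRef m n i j * Real.exp (β * (u i + v j - c i j)))

/-- The set `C_β` of plans of the form `diag(a) e^{-βc} diag(b)` with `a, b ≥ 0`. -/
def scalingSet {m n : ℕ} (c : Matrix (Fin m) (Fin n) ℝ) (β : ℝ) :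
    Set (Matrix (Fin m) (Fin n) ℝ) :=
  {π | ∃ a : Fin m → ℝ, ∃ b : Fin n → ℝ, (∀ i, 0 ≤ a i) ∧ (∀ j, 0 ≤ b j) ∧
    π = fun i j => a i * Real.exp (-(β * c i j)) * b j}

/-!
The first-order conditions of the dual identify both marginals of the plan
`P i j = exp (β (u i + v j - c i j)) / (mn)`: they are `exp (-α u) p` and `q`. Equating the two
total masses, `exp (-α u)` has `p`-average `1`, so `u` takes both a nonpositive and a nonnegative
value, and it is enough to bound `u i - u k`. Two rows of `P` differ by a factor of at most
`exp (β (u k - u i) + β ‖c‖_osc)`; comparing the row sums and taking logarithms gives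
`(α + β) (u i - u k) ≤ log (p i) - log (p k) + β ‖c‖_osc`.
-/

theorem exists_nonpos_and_exists_nonneg_of_sum_exp_mul_eq {ι : Type*} [Fintype ι] [Nonempty ι]
    {w u : ι → ℝ} {a : ℝ} (hw : ∀ i, 0 < w i) (ha : 0 < a)
    (h : ∑ i, Real.exp (-(a * u i)) * w i = ∑ i, w i) :
    (∃ k, u k ≤ 0) ∧ ∃ k, 0 ≤ u k := by
  constructor
  · obtain ⟨k, -, hk⟩ := exists_le_of_sum_le univ_nonempty h.ge
    have : 0 ≤ -(a * u k) := Real.one_le_exp_iff.1 ((le_mul_iff_one_le_left (hw k)).1 hk)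
    exact ⟨k, nonpos_of_mul_nonpos_right (neg_nonneg.1 this) ha⟩
  · obtain ⟨k, -, hk⟩ := exists_le_of_sum_le univ_nonempty h.le
    have : -(a * u k) ≤ 0 := Real.exp_le_one_iff.1 ((mul_le_iff_le_one_left (hw k)).1 hk)
    exact ⟨k, nonneg_of_mul_nonneg_right (neg_nonpos.1 this) ha⟩

theorem abs_log_le_logSup {k : ℕ} (p : Fin k → ℝ) (i : Fin k) : |Real.log (p i)| ≤ logSup p :=
  le_ciSup (f := fun i => |Real.log (p i)|) (Set.finite_range _).bddAbove i

theorem logSup_nonneg {k : ℕ} (p : Fin k → ℝ) : 0 ≤ logSup p :=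
  Real.iSup_nonneg fun _ => abs_nonneg _

theorem sub_le_cOsc {m n : ℕ} (c : Matrix (Fin m) (Fin n) ℝ) (i k : Fin m) (j l : Fin n) :
    c i j - c k l ≤ cOsc c :=
  sub_le_sub
    (le_ciSup_of_le (Set.finite_range _).bddAbove i (le_ciSup (Set.finite_range (c i)).bddAbove j))
    (ciInf_le_of_le (Set.finite_range _).bddBelow k (ciInf_le (Set.finite_range (c k)).bddBelow l))

/-- The primal plan `e^{β(u𝟙ᵀ + 𝟙vᵀ - c)} ⊙ π^ref` attached to the dual variables `(u, v)`. Its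
marginals are the ones that appear in the gradient of `dualFun`. -/
def dualPlan {m n : ℕ} (c : Matrix (Fin m) (Fin n) ℝ) (β : ℝ) (u : Fin m → ℝ) (v : Fin n → ℝ) :
    Matrix (Fin m) (Fin n) ℝ :=
  fun i j => Real.exp (β * (u i + v j - c i j)) * piRef m n i j

section Dual

variable {m n : ℕ} {p : Fin m → ℝ} {q : Fin n → ℝ} {c : Matrix (Fin m) (Fin n) ℝ} {α β : ℝ}
  {u : Fin m → ℝ} {v : Fin n → ℝ}

theorem rowSum_dualPlan_le (hβ : 0 ≤ β) (i k : Fin m) :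
    rowSum (dualPlan c β u v) k
      ≤ Real.exp (β * (u k - u i) + β * cOsc c) * rowSum (dualPlan c β u v) i := by
  simp only [rowSum, dualPlan, mul_sum, ← mul_assoc, ← Real.exp_add]
  have href (j : Fin n) : 0 ≤ piRef m n k j := by unfold piRef; positivity
  refine sum_le_sum fun j _ => mul_le_mul_of_nonneg_right (Real.exp_le_exp.2 ?_) (href j)
  linarith [mul_le_mul_of_nonneg_left (sub_le_cOsc c i k j j) hβ]

theorem hasDerivAt_sum_dualPlan (a : Fin m → ℝ) (b : Fin n → ℝ) :
    HasDerivAt (fun t : ℝ => ∑ i, ∑ j, dualPlan c β (u + t • a) (v + t • b) i j)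
      (β * (rowSum (dualPlan c β u v) ⬝ᵥ a + colSum (dualPlan c β u v) ⬝ᵥ b)) 0 := by
  have hentry (i : Fin m) (j : Fin n) :
      HasDerivAt (fun t : ℝ => dualPlan c β (u + t • a) (v + t • b) i j)
        (β * (dualPlan c β u v i j * a i + dualPlan c β u v i j * b j)) 0 := by
    have hexponent : HasDerivAt (fun t : ℝ => β * (u i + t * a i + (v j + t * b j) - c i j))
        (β * (a i + b j)) 0 :=
      ((((hasDerivAt_mul_const (a i)).const_add (u i)).add
        ((hasDerivAt_mul_const (b j)).const_add (v j))).sub_const (c i j)).const_mul β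
    refine (hexponent.exp.mul_const (piRef m n i j)).congr_deriv ?_
    simp only [zero_mul, add_zero, dualPlan]
    ring
  refine (HasDerivAt.fun_sum fun i _ => HasDerivAt.fun_sum fun j _ => hentry i j).congr_deriv ?_
  simp only [dotProduct, rowSum, colSum, sum_mul, ← mul_sum, sum_add_distrib]
  rw [sum_comm (f := fun j i => dualPlan c β u v i j * b j)]

theorem hasDerivAt_dualFun (hα : α ≠ 0) (hβ : β ≠ 0) (a : Fin m → ℝ) (b : Fin n → ℝ) :
    HasDerivAt (fun t : ℝ => dualFun p q c α β (u + t • a) (v + t • b))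
      (((fun i => Real.exp (-(α * u i)) * p i) - rowSum (dualPlan c β u v)) ⬝ᵥ a
        + (q - colSum (dualPlan c β u v)) ⬝ᵥ b) 0 := by
  have hmarginal (i : Fin m) :
      HasDerivAt (fun t : ℝ => (1 - Real.exp (-(α * (u i + t * a i)))) * p i)
        (α * (Real.exp (-(α * u i)) * p i * a i)) 0 := by
    have hexponent : HasDerivAt (fun t : ℝ => -(α * (u i + t * a i))) (-(α * a i)) 0 :=
      (((hasDerivAt_mul_const (a i)).const_add (u i)).const_mul α).neg
    refine ((hexponent.exp.const_sub 1).mul_const (p i)).congr_deriv ?_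
    simp only [zero_mul, add_zero]
    ring
  have hlinear (j : Fin n) : HasDerivAt (fun t : ℝ => (v j + t * b j) * q j) (b j * q j) 0 :=
    ((hasDerivAt_mul_const (b j)).const_add (v j)).mul_const (q j)
  refine (((((HasDerivAt.fun_sum fun i _ => hmarginal i).const_mul α⁻¹).add
    (HasDerivAt.fun_sum fun j _ => hlinear j)).sub
      ((hasDerivAt_sum_dualPlan a b).const_mul β⁻¹)).add_const β⁻¹).congr_deriv ?_
  simp only [← mul_sum, inv_mul_cancel_left₀ hα, inv_mul_cancel_left₀ hβ, sub_dotProduct]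
  simp only [dotProduct, mul_comm (b _)]
  ring

theorem marginals_dualPlan_of_forall_le (hα : α ≠ 0) (hβ : β ≠ 0)
    (hmax : ∀ u' v', dualFun p q c α β u' v' ≤ dualFun p q c α β u v) :
    rowSum (dualPlan c β u v) = (fun i => Real.exp (-(α * u i)) * p i) ∧
      colSum (dualPlan c β u v) = q := by
  have hstationary (a : Fin m → ℝ) (b : Fin n → ℝ) :
      ((fun i => Real.exp (-(α * u i)) * p i) - rowSum (dualPlan c β u v)) ⬝ᵥ a
        + (q - colSum (dualPlan c β u v)) ⬝ᵥ b = 0 := by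
    refine IsLocalMax.hasDerivAt_eq_zero (.of_forall fun t => ?_) (hasDerivAt_dualFun hα hβ a b)
    simpa only [zero_smul, add_zero] using hmax (u + t • a) (v + t • b)
  constructor <;> refine Eq.symm (sub_eq_zero.1 (dotProduct_eq_zero _ fun w => ?_))
  · simpa only [dotProduct_zero, add_zero] using hstationary w 0
  · simpa only [dotProduct_zero, zero_add] using hstationary 0 w

theorem sum_exp_mul_eq_sum_of_marginals
    (hrow : rowSum (dualPlan c β u v) = fun i => Real.exp (-(α * u i)) * p i)
    (hcol : colSum (dualPlan c β u v) = q) :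
    ∑ i, Real.exp (-(α * u i)) * p i = ∑ j, q j := by
  rw [← hcol, ← Finset.sum_congr rfl fun i _ => congrFun hrow i]
  exact sum_comm

theorem mul_sub_le_of_rowSum_dualPlan_eq (hβ : 0 ≤ β) (hp : ∀ i, 0 < p i)
    (hrow : rowSum (dualPlan c β u v) = fun i => Real.exp (-(α * u i)) * p i) (i k : Fin m) :
    (α + β) * (u i - u k) ≤ Real.log (p i) - Real.log (p k) + β * cOsc c := by
  have hle : rowSum (dualPlan c β u v) k ≤ _ := rowSum_dualPlan_le hβ i k
  simp only [hrow, ← mul_assoc, ← Real.exp_add] at hle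
  have hlog := Real.log_le_log (mul_pos (Real.exp_pos _) (hp k)) hle
  rw [Real.log_mul (Real.exp_ne_zero _) (hp k).ne', Real.log_mul (Real.exp_ne_zero _) (hp i).ne',
    Real.log_exp, Real.log_exp] at hlog
  linarith

end Dual

theorem dual_variable_linf_bound_general {m n : ℕ} {p : Fin m → ℝ} {q : Fin n → ℝ}
    {c : Matrix (Fin m) (Fin n) ℝ} (hp : ∀ i, 0 < p i) (hpq : ∑ i, p i = ∑ j, q j)
    {α β : ℝ} (hα : 0 < α) (hβ : 0 < β) {u : Fin m → ℝ} {v : Fin n → ℝ}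
    (hmax : ∀ u' v', dualFun p q c α β u' v' ≤ dualFun p q c α β u v) (i : Fin m) :
    |u i| ≤ β / (α + β) * (2 * logSup p / β + cOsc c) := by
  obtain ⟨hrow, hcol⟩ := marginals_dualPlan_of_forall_le hα.ne' hβ.ne' hmax
  have hbound (i k : Fin m) : u i - u k ≤ β / (α + β) * (2 * logSup p / β + cOsc c) := by
    have hrhs : β / (α + β) * (2 * logSup p / β + cOsc c)
        = (2 * logSup p + β * cOsc c) / (α + β) := by field_simp
    rw [hrhs, le_div_iff₀' (by positivity)]
    linarith [mul_sub_le_of_rowSum_dualPlan_eq hβ.le hp hrow i k,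
      (abs_le.1 (abs_log_le_logSup p i)).2, (abs_le.1 (abs_log_le_logSup p k)).1]
  have : Nonempty (Fin m) := ⟨i⟩
  obtain ⟨⟨k, hk⟩, l, hl⟩ := exists_nonpos_and_exists_nonneg_of_sum_exp_mul_eq hp hα
    ((sum_exp_mul_eq_sum_of_marginals hrow hcol).trans hpq.symm)
  exact abs_le.2 ⟨by linarith [hbound l i], by linarith [hbound i k]⟩

/-- ℓ∞ bound on the optimal dual variable, from the proof of Lemma 4.
If `(u,v)` maximizes the dual functional `D`, then
`‖u‖_∞ ≤ (β/(α+β))(4‖log p‖_∞/β + ‖c‖_osc)`. -/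
theorem dual_variable_linf_bound
    {m n : ℕ} (p : Fin m → ℝ) (q : Fin n → ℝ) (c : Matrix (Fin m) (Fin n) ℝ)
    (hp : p ∈ simplexPos m) (hq : q ∈ simplexPos n)
    (α β : ℝ) (hα : 0 < α) (hβ : 0 < β)
    (u : Fin m → ℝ) (v : Fin n → ℝ)
    (hmax : ∀ (u' : Fin m → ℝ) (v' : Fin n → ℝ),
      dualFun p q c α β u' v' ≤ dualFun p q c α β u v) :
    (⨆ i, |u i|) ≤ (β / (α + β)) * (4 * logSup p / β + cOsc c) := by
  have : Nonempty (Fin m) := univ_nonempty_iff.1 (nonempty_of_sum_ne_zero (hp.2 ▸ one_ne_zero))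
  refine ciSup_le fun i =>
    (dual_variable_linf_bound_general hp.1 (hp.2.trans hq.2.symm) hα hβ hmax i).trans ?_
  gcongr
  exacts [logSup_nonneg p, by norm_num]

end
end

section
/- Let p ∈ Δ*_m, q ∈ Δ*_n, c ∈ ℝ^{m×n}. Assume the optimal transport problem OT(p,q) admits a unique pair of Kantorovich potentials (u_∞, v_∞) up to translation (i.e., every other dual-optimal pair is (u_∞ + λ𝟙, v_∞ − λ𝟙) for some λ ∈ ℝ). Let (β_t) be a schedule with β_t → ∞ and α_t = β_t − β_{t−1} > 0 with α_t → 0, and let (u_t) be any sequence in ℝ^m converging to u_∞ up to constant shifts (i.e., inf_{λ∈ℝ} ‖u_t − u_∞ + λ𝟙‖_∞ → 0). Define p̃_t = Z_t^{-1} e^{α_t u_t} ⊙ p with Z_t = ‖e^{α_t u_t} ⊙ p‖₁, and let π̃^reg_t be the unique minimizer over Γ(*,q) of ⟨c,π⟩ + (1/α_t) KL(π𝟙 | p̃_t) + (1/β_t) KL(π | π^ref). Then ‖π̃^reg_t 𝟙 − p‖₁ = o(α_t) as t → ∞. -/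
open Finset Filter Topology ENNReal

noncomputable section

/-!
Stationarity of the regularized plan `π`, with row sums `r`, says that
`w i + v j = c i j + β⁻¹ log (π i j)` with `r = s ⊙ exp (-α w)`, where `s` is the row reference
measure. Since `π ≤ 1` the pair `(w, v)` is dual feasible, and since the entropy is bounded it is
within `m n / β` of optimal for `OT(r, q)`. For the debiased reference `s ∝ exp (α u) ⊙ p` one gets
`r = p ⊙ exp (α (u - w))` up to a shift of `u`, so `r - p` and `w - u` have opposite signs:
replacing `r` by `p` in the dual value costs at most twice the distance from `u` to `u∞`. Hence
`(w, v)` is almost optimal for `OT(p, q)`, and uniqueness of the potentials forces `w`, like `u`, to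
be close to `u∞` up to a shift. Since `r` and `p` have the same mass, this shift is small too, so
that `‖r - p‖₁ ≤ 2 α ‖u - w‖_∞ = o(α)`.
-/

open InformationTheory Matrix

/-! ### Kantorovich potentials -/

section Kantorovich

variable {ι κ : Type*} [Fintype ι] [Fintype κ] {p : ι → ℝ} {q : κ → ℝ} {c : Matrix ι κ ℝ}

/-- The dual objective `⟨p, u⟩ + ⟨q, v⟩` of the optimal transport problem `OT(p, q)`. -/
def kantorovichDual (p : ι → ℝ) (q : κ → ℝ) (u : ι → ℝ) (v : κ → ℝ) : ℝ :=
  ∑ i, p i * u i + ∑ j, q j * v j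

/-- The pair `(u, v)` is the unique pair of Kantorovich potentials for `OT(p, q)`, up to
translation. -/
structure IsUniqueKantorovichPair (p : ι → ℝ) (q : κ → ℝ) (c : Matrix ι κ ℝ)
    (u : ι → ℝ) (v : κ → ℝ) : Prop where
  feasible : ∀ i j, u i + v j ≤ c i j
  optimal : ∀ (u' : ι → ℝ) (v' : κ → ℝ), (∀ i j, u' i + v' j ≤ c i j) →
    kantorovichDual p q u' v' ≤ kantorovichDual p q u v
  unique : ∀ (u' : ι → ℝ) (v' : κ → ℝ), (∀ i j, u' i + v' j ≤ c i j) →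
    kantorovichDual p q u' v' = kantorovichDual p q u v →
    ∃ lam : ℝ, u' = (fun i => u i + lam) ∧ v' = (fun j => v j - lam)

lemma continuous_kantorovichDual :
    Continuous fun x : (ι → ℝ) × (κ → ℝ) => kantorovichDual p q x.1 x.2 := by
  unfold kantorovichDual
  fun_prop

lemma kantorovichDual_shift (hpq : ∑ i, p i = ∑ j, q j) (u : ι → ℝ) (v : κ → ℝ) (lam : ℝ) :
    kantorovichDual p q (fun i => u i - lam) (fun j => v j + lam) = kantorovichDual p q u v := by
  simp only [kantorovichDual, mul_sub, mul_add, sum_sub_distrib, sum_add_distrib, ← sum_mul, hpq]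
  ring

lemma sum_mul_slack (hp : ∑ i, p i = 1) (hq : ∑ j, q j = 1) (u : ι → ℝ) (v : κ → ℝ) :
    ∑ i, ∑ j, p i * q j * (c i j - (u i + v j)) =
      ∑ i, ∑ j, p i * q j * c i j - kantorovichDual p q u v := by
  have hu : ∑ i, ∑ j, p i * q j * u i = ∑ i, p i * u i :=
    sum_congr rfl fun i _ => by rw [← sum_mul, ← mul_sum, hq, mul_one]
  have hv : ∑ i, ∑ j, p i * q j * v j = ∑ j, q j * v j := by
    simp only [mul_assoc, ← mul_sum, ← sum_mul, hp, one_mul]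
  simp only [mul_sub, mul_add, sum_sub_distrib, sum_add_distrib, hu, hv, kantorovichDual]

lemma mul_slack_le (hp : ∀ i, 0 < p i) (hp₁ : ∑ i, p i = 1) (hq : ∀ j, 0 < q j)
    (hq₁ : ∑ j, q j = 1) {u : ι → ℝ} {v : κ → ℝ} (huv : ∀ i j, u i + v j ≤ c i j)
    (i : ι) (j : κ) :
    p i * q j * (c i j - (u i + v j)) ≤
      ∑ k, ∑ l, p k * q l * c k l - kantorovichDual p q u v := by
  have hnonneg : ∀ k l, 0 ≤ p k * q l * (c k l - (u k + v l)) := fun k l =>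
    mul_nonneg (mul_pos (hp k) (hq l)).le (sub_nonneg.2 (huv k l))
  calc p i * q j * (c i j - (u i + v j))
      ≤ ∑ l, p i * q l * (c i l - (u i + v l)) :=
        single_le_sum (f := fun l => p i * q l * (c i l - (u i + v l)))
          (fun l _ => hnonneg i l) (mem_univ j)
    _ ≤ ∑ k, ∑ l, p k * q l * (c k l - (u k + v l)) :=
        single_le_sum (f := fun k => ∑ l, p k * q l * (c k l - (u k + v l)))
          (fun k _ => sum_nonneg fun l _ => hnonneg k l) (mem_univ i)
    _ = _ := sum_mul_slack hp₁ hq₁ u v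

/-- A lower bound on the dual value bounds every slack `c i j - u i - v j`; the normalization
`u i₀ = 0` turns this into bounds on `u` and `v`. -/
lemma isCompact_dual_superlevel (hp : ∀ i, 0 < p i) (hp₁ : ∑ i, p i = 1) (hq : ∀ j, 0 < q j)
    (hq₁ : ∑ j, q j = 1) (i₀ : ι) (a : ℝ) :
    IsCompact {x : (ι → ℝ) × (κ → ℝ) | (∀ i j, x.1 i + x.2 j ≤ c i j) ∧
      a ≤ kantorovichDual p q x.1 x.2 ∧ x.1 i₀ = 0} := by
  obtain ⟨j₀, -⟩ : (univ : Finset κ).Nonempty :=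
    nonempty_of_sum_ne_zero (hq₁.trans_ne one_ne_zero)
  set b : Matrix ι κ ℝ :=
    fun i j => c i j - (∑ k, ∑ l, p k * q l * c k l - a) / (p i * q j) with hb
  refine (isCompact_Icc
    (a := ((fun i => b i j₀ - c i₀ j₀, fun j => b i₀ j) : (ι → ℝ) × (κ → ℝ)))
    (b := (fun i => c i j₀ - b i₀ j₀, fun j => c i₀ j))).of_isClosed_subset ?_ ?_
  · simp only [Set.ofPred_and, Set.ofPred_forall]
    exact (isClosed_iInter fun i => isClosed_iInter fun j =>
      isClosed_le (by fun_prop) continuous_const).inter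
      ((isClosed_le continuous_const continuous_kantorovichDual).inter
        (isClosed_eq (by fun_prop) continuous_const))
  · rintro ⟨u, v⟩ ⟨huv, ha, hu₀⟩
    dsimp only at huv ha hu₀
    have hlow : ∀ i j, b i j ≤ u i + v j := fun i j => by
      have hslack := mul_slack_le hp hp₁ hq hq₁ huv i j
      rw [hb, sub_le_comm, le_div_iff₀' (mul_pos (hp i) (hq j))]
      linarith
    have hv : ∀ j, b i₀ j ≤ v j ∧ v j ≤ c i₀ j := fun j =>
      ⟨by linarith [hlow i₀ j], by linarith [huv i₀ j]⟩
    exact ⟨⟨fun i => by linarith [hlow i j₀, (hv j₀).2], fun j => (hv j).1⟩,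
      ⟨fun i => by linarith [huv i j₀, (hv j₀).1], fun j => (hv j).2⟩⟩

lemma IsUniqueKantorovichPair.exists_shift_of_almost_optimal {u : ι → ℝ} {v : κ → ℝ}
    (h : IsUniqueKantorovichPair p q c u v) (hp : ∀ i, 0 < p i) (hp₁ : ∑ i, p i = 1)
    (hq : ∀ j, 0 < q j) (hq₁ : ∑ j, q j = 1) {ε : ℝ} (hε : 0 < ε) :
    ∃ η > 0, ∀ (u' : ι → ℝ) (v' : κ → ℝ), (∀ i j, u' i + v' j ≤ c i j) →
      kantorovichDual p q u v - η < kantorovichDual p q u' v' →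
      ∃ lam : ℝ, ∀ i, |u' i - u i - lam| < ε := by
  obtain ⟨i₀, -⟩ : (univ : Finset ι).Nonempty :=
    nonempty_of_sum_ne_zero (hp₁.trans_ne one_ne_zero)
  set V := kantorovichDual p q u v
  set far : Set ((ι → ℝ) × (κ → ℝ)) := {x | (∀ i j, x.1 i + x.2 j ≤ c i j) ∧
    V - 1 ≤ kantorovichDual p q x.1 x.2 ∧ x.1 i₀ = 0} ∩ {x | ε ≤ dist x.1 fun i => u i - u i₀}
  have hcompact : IsCompact far := (isCompact_dual_superlevel hp hp₁ hq hq₁ i₀ (V - 1)).inter_right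
    (isClosed_le continuous_const (continuous_fst.dist continuous_const))
  have hgap_pos : ∀ x ∈ far, 0 < V - kantorovichDual p q x.1 x.2 := by
    rintro ⟨u', v'⟩ ⟨⟨hfeas, -, hnorm⟩, hfar⟩
    refine sub_pos.2 ((h.optimal u' v' hfeas).lt_of_ne fun heq => hε.not_ge ?_)
    obtain ⟨lam, rfl, -⟩ := h.unique u' v' hfeas heq
    have hlam : lam = -u i₀ := by dsimp only at hnorm; linarith
    simpa [hlam, sub_eq_add_neg] using hfar
  obtain ⟨η, hη, hgap : ∀ x ∈ far, η ≤ V - kantorovichDual p q x.1 x.2⟩ :=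
    hcompact.exists_forall_le'
      (continuous_const.sub continuous_kantorovichDual).continuousOn hgap_pos
  refine ⟨min 1 η, lt_min one_pos hη, fun u' v' hfeas hval => ⟨u' i₀ - u i₀, fun i => ?_⟩⟩
  have hclose : dist (fun i => u' i - u' i₀) (fun i => u i - u i₀) < ε := by
    by_contra! hfar
    have hshift := kantorovichDual_shift (hp₁.trans hq₁.symm) u' v' (u' i₀)
    have hle := hgap (fun i => u' i - u' i₀, fun j => v' j + u' i₀)
      ⟨⟨fun i j => by linarith [hfeas i j], by linarith [min_le_left 1 η], sub_self _⟩, hfar⟩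
    linarith [min_le_right 1 η]
  calc |u' i - u i - (u' i₀ - u i₀)| = dist (u' i - u' i₀) (u i - u i₀) := by
        rw [Real.dist_eq]; congr 1; ring
    _ < ε := (dist_le_pi_dist _ _ i).trans_lt hclose

end Kantorovich

/-! ### Optimality conditions for the regularized problem -/

section Regularized

variable {m n : ℕ}

lemma frob_add_smul (c π E : Matrix (Fin m) (Fin n) ℝ) (x y : ℝ) :
    frob c (x • π + y • E) = x * frob c π + y * frob c E := by
  simp only [frob, Matrix.add_apply, Matrix.smul_apply, smul_eq_mul, mul_sum, ← sum_add_distrib]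
  exact sum_congr rfl fun _ _ => sum_congr rfl fun _ _ => by ring

lemma rowSum_add_smul (π E : Matrix (Fin m) (Fin n) ℝ) (x y : ℝ) :
    rowSum (x • π + y • E) = x • rowSum π + y • rowSum E := by
  ext i
  simp [rowSum, sum_add_distrib, mul_sum]

lemma colSum_add_smul (π E : Matrix (Fin m) (Fin n) ℝ) (x y : ℝ) :
    colSum (x • π + y • E) = x • colSum π + y • colSum E := by
  ext j
  simp [colSum, sum_add_distrib, mul_sum]

lemma frob_single (c : Matrix (Fin m) (Fin n) ℝ) (i : Fin m) (j : Fin n) :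
    frob c (single i j 1) = c i j := by
  simp [frob, single_apply, ite_and]

lemma convex_GammaStar (q : Fin n → ℝ) : Convex ℝ (GammaStar (m := m) q) := by
  rintro π ⟨hπ, rfl⟩ π' ⟨hπ', hcol⟩ x y hx hy hxy
  refine ⟨fun i j => ?_, by rw [colSum_add_smul, hcol, ← add_smul, hxy, one_smul]⟩
  exact add_nonneg (mul_nonneg hx (hπ i j)) (mul_nonneg hy (hπ' i j))

lemma rowSum_nonneg {π : Matrix (Fin m) (Fin n) ℝ} (hπ : ∀ i j, 0 ≤ π i j) (i : Fin m) :
    0 ≤ rowSum π i :=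
  sum_nonneg fun j _ => hπ i j

lemma sum_rowSum_eq_sum_colSum (π : Matrix (Fin m) (Fin n) ℝ) :
    ∑ i, rowSum π i = ∑ j, colSum π j :=
  sum_comm

lemma le_of_mem_GammaStar {q : Fin n → ℝ} {π : Matrix (Fin m) (Fin n) ℝ}
    (hπ : π ∈ GammaStar q) (i : Fin m) (j : Fin n) : π i j ≤ q j := by
  rw [← hπ.2]
  exact single_le_sum (f := fun i => π i j) (fun i _ => hπ.1 i j) (mem_univ i)

lemma piRef_pos (i : Fin m) (j : Fin n) : 0 < piRef m n i j := by
  have hm : (0 : ℝ) < m := Nat.cast_pos.2 i.pos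
  have hn : (0 : ℝ) < n := Nat.cast_pos.2 j.pos
  exact one_div_pos.2 (mul_pos hm hn)

lemma mul_klFun_div {b : ℝ} (hb : b ≠ 0) (a : ℝ) :
    b * klFun (a / b) = a * Real.log (a / b) - a + b := by
  rw [klFun_apply]
  field_simp
  ring

lemma KLvec_eq_sum_klFun {k : ℕ} {b : Fin k → ℝ} (hb : ∀ i, b i ≠ 0) (a : Fin k → ℝ) :
    KLvec a b = ∑ i, b i * klFun (a i / b i) :=
  sum_congr rfl fun i _ => (mul_klFun_div (hb i) (a i)).symm

lemma KLmat_eq_sum_klFun {b : Matrix (Fin m) (Fin n) ℝ} (hb : ∀ i j, b i j ≠ 0)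
    (a : Matrix (Fin m) (Fin n) ℝ) : KLmat a b = ∑ i, ∑ j, b i j * klFun (a i j / b i j) :=
  sum_congr rfl fun i _ => sum_congr rfl fun j _ => (mul_klFun_div (hb i j) (a i j)).symm

lemma mul_klFun_div_segment_le {b x y t : ℝ} (hb : 0 < b) (hx : 0 ≤ x) (hy : 0 ≤ y)
    (ht₀ : 0 ≤ t) (ht₁ : t ≤ 1) :
    b * klFun (((1 - t) * x + t * y) / b) ≤
      (1 - t) * (b * klFun (x / b)) + t * (b * klFun (y / b)) := by
  have hconv := convexOn_klFun.2 (div_nonneg hx hb.le) (div_nonneg hy hb.le)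
    (sub_nonneg.2 ht₁) ht₀ (sub_add_cancel 1 t)
  simp only [smul_eq_mul, ← mul_div_assoc, ← add_div] at hconv
  linarith [mul_le_mul_of_nonneg_left hconv hb.le]

lemma KLvec_segment_le {k : ℕ} {a a' b : Fin k → ℝ} (ha : ∀ i, 0 ≤ a i) (ha' : ∀ i, 0 ≤ a' i)
    (hb : ∀ i, 0 < b i) {t : ℝ} (ht₀ : 0 ≤ t) (ht₁ : t ≤ 1) :
    KLvec ((1 - t) • a + t • a') b ≤ (1 - t) * KLvec a b + t * KLvec a' b := by
  simp only [KLvec_eq_sum_klFun fun i => (hb i).ne', mul_sum, ← sum_add_distrib]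
  exact sum_le_sum fun i _ => mul_klFun_div_segment_le (hb i) (ha i) (ha' i) ht₀ ht₁

lemma klFun_mul {x t : ℝ} (hx : x ≠ 0) (ht : t ≠ 0) :
    klFun (t * x) = (1 - t) * klFun 0 + t * klFun x + t * x * Real.log t := by
  simp only [klFun_apply, Real.log_mul ht hx]
  ring

/-- The slope of `klFun` at `0` is `-∞`: filling an empty entry improves on convexity by the
superlinear term `t log t`. -/
lemma KLmat_segment_le {a a' b : Matrix (Fin m) (Fin n) ℝ} (ha : ∀ i j, 0 ≤ a i j)
    (ha' : ∀ i j, 0 ≤ a' i j) (hb : ∀ i j, 0 < b i j) {i : Fin m} {j : Fin n}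
    (hij : a i j = 0) (hij' : 0 < a' i j) {t : ℝ} (ht₀ : 0 < t) (ht₁ : t ≤ 1) :
    KLmat ((1 - t) • a + t • a') b ≤
      (1 - t) * KLmat a b + t * KLmat a' b + t * a' i j * Real.log t := by
  set gap : Fin m → Fin n → ℝ := fun k l =>
    (1 - t) * (b k l * klFun (a k l / b k l)) + t * (b k l * klFun (a' k l / b k l)) -
      b k l * klFun (((1 - t) * a k l + t * a' k l) / b k l)
  have hgap_nonneg : ∀ k l, 0 ≤ gap k l := fun k l =>
    sub_nonneg.2 (mul_klFun_div_segment_le (hb k l) (ha k l) (ha' k l) ht₀.le ht₁)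
  have hgap_ij : gap i j = -(t * a' i j * Real.log t) := by
    have hmul := klFun_mul (div_pos hij' (hb i j)).ne' ht₀.ne'
    have := (hb i j).ne'
    simp only [gap, hij, mul_zero, zero_add, zero_div, mul_div_assoc, hmul]
    field_simp
    ring
  have hle : gap i j ≤ ∑ k, ∑ l, gap k l :=
    (single_le_sum (f := gap i) (fun l _ => hgap_nonneg i l) (mem_univ j)).trans
      (single_le_sum (f := fun k => ∑ l, gap k l)
        (fun k _ => sum_nonneg fun l _ => hgap_nonneg k l) (mem_univ i))
  have hsum : ∑ k, ∑ l, gap k l =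
      (1 - t) * KLmat a b + t * KLmat a' b - KLmat ((1 - t) • a + t • a') b := by
    simp only [KLmat_eq_sum_klFun fun k l => (hb k l).ne', gap, sum_sub_distrib, sum_add_distrib,
      mul_sum, Matrix.add_apply, Matrix.smul_apply, smul_eq_mul]
  linarith

variable {c : Matrix (Fin m) (Fin n) ℝ} {s : Fin m → ℝ} {q : Fin n → ℝ} {α β : ℝ}
  {π : Matrix (Fin m) (Fin n) ℝ}

lemma Freg_segment_le {π' : Matrix (Fin m) (Fin n) ℝ} (hs : ∀ i, 0 < s i) (hα : 0 ≤ α)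
    (hβ : 0 ≤ β) (hπ : ∀ i j, 0 ≤ π i j) (hπ' : ∀ i j, 0 ≤ π' i j) {i : Fin m} {j : Fin n}
    (hij : π i j = 0) (hij' : 0 < π' i j) {t : ℝ} (ht₀ : 0 < t) (ht₁ : t ≤ 1) :
    Freg c s α β ((1 - t) • π + t • π') ≤
      (1 - t) * Freg c s α β π + t * Freg c s α β π' + β⁻¹ * (t * π' i j * Real.log t) := by
  have hrow := mul_le_mul_of_nonneg_left (KLvec_segment_le (rowSum_nonneg hπ)
    (rowSum_nonneg hπ') hs ht₀.le ht₁) (inv_nonneg.2 hα)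
  have hplan := mul_le_mul_of_nonneg_left (KLmat_segment_le hπ hπ' piRef_pos hij hij' ht₀ ht₁)
    (inv_nonneg.2 hβ)
  simp only [Freg, frob_add_smul, rowSum_add_smul]
  linarith

lemma pos_of_isMinOn_Freg (hs : ∀ i, 0 < s i) (hq : ∀ j, 0 < q j) (hα : 0 ≤ α) (hβ : 0 < β)
    (hπ : π ∈ GammaStar q) (hmin : IsMinOn (Freg c s α β) (GammaStar q) π)
    (i : Fin m) (j : Fin n) : 0 < π i j := by
  by_contra! hle
  have hij : π i j = 0 := hle.antisymm (hπ.1 i j)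
  have hm : (0 : ℝ) < m := Nat.cast_pos.2 i.pos
  set π' : Matrix (Fin m) (Fin n) ℝ := fun _ l => q l / m
  have hπ'_pos : ∀ k l, 0 < π' k l := fun _ l => div_pos (hq l) hm
  have hπ' : π' ∈ GammaStar q := by
    refine ⟨fun k l => (hπ'_pos k l).le, funext fun l => ?_⟩
    simp [colSum, π', mul_div_cancel₀ _ hm.ne']
  obtain ⟨t, hlog, ht₀, ht₁⟩ : ∃ t, Real.log t <
      (Freg c s α β π - Freg c s α β π') * β / π' i j ∧ 0 < t ∧ t < 1 :=
    ((Real.tendsto_log_nhdsGT_zero.eventually_lt_atBot _).and (Ioo_mem_nhdsGT one_pos)).exists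
  have hseg := Freg_segment_le (c := c) hs hα hβ.le hπ.1 hπ'.1 hij (hπ'_pos i j) ht₀ ht₁.le
  have hopt := isMinOn_iff.1 hmin _
    (convex_GammaStar q hπ hπ' (sub_nonneg.2 ht₁.le) ht₀.le (sub_add_cancel 1 t))
  have hdecr : β⁻¹ * (π' i j * Real.log t) < Freg c s α β π - Freg c s α β π' := by
    rw [lt_div_iff₀ (hπ'_pos i j)] at hlog
    rw [inv_mul_lt_iff₀ hβ]
    linarith
  nlinarith [mul_lt_mul_of_pos_left hdecr ht₀]

/-- The entrywise gradient of `Freg c s α β` at `π`. -/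
def fregGrad (c : Matrix (Fin m) (Fin n) ℝ) (s : Fin m → ℝ) (α β : ℝ)
    (π : Matrix (Fin m) (Fin n) ℝ) : Matrix (Fin m) (Fin n) ℝ := fun i j =>
  c i j + α⁻¹ * Real.log (rowSum π i / s i) + β⁻¹ * Real.log (π i j / piRef m n i j)

lemma hasDerivAt_mul_klFun_div {b x : ℝ} (hb : b ≠ 0) (hx : x ≠ 0) (d : ℝ) :
    HasDerivAt (fun e => b * klFun ((x + e * d) / b)) (Real.log (x / b) * d) 0 := by
  have hline : HasDerivAt (fun e => (x + e * d) / b) (d / b) 0 := by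
    simpa using (((hasDerivAt_id (0 : ℝ)).mul_const d).const_add x).div_const b
  have hcomp : HasDerivAt (fun e => b * klFun ((x + e * d) / b))
      (b * (Real.log (x / b) * (d / b))) 0 :=
    ((hasDerivAt_klFun (div_ne_zero hx hb)).comp_of_eq 0 hline (by simp)).const_mul b
  rwa [mul_left_comm, mul_div_cancel₀ _ hb] at hcomp

lemma hasDerivAt_Freg (hs : ∀ i, s i ≠ 0) (hπ : ∀ i j, π i j ≠ 0) (hr : ∀ i, rowSum π i ≠ 0)
    (E : Matrix (Fin m) (Fin n) ℝ) :
    HasDerivAt (fun e : ℝ => Freg c s α β (π + e • E)) (frob (fregGrad c s α β π) E) 0 := by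
  have hsplit : frob (fregGrad c s α β π) E = frob c E +
      α⁻¹ * ∑ i, Real.log (rowSum π i / s i) * rowSum E i +
      β⁻¹ * ∑ i, ∑ j, Real.log (π i j / piRef m n i j) * E i j := by
    simp only [frob, fregGrad, rowSum, add_mul, sum_add_distrib, mul_sum, mul_assoc]
  have hline : ∀ e : ℝ, Freg c s α β (π + e • E) = frob c π + e * frob c E +
      α⁻¹ * ∑ i, s i * klFun ((rowSum π i + e * rowSum E i) / s i) +
      β⁻¹ * ∑ i, ∑ j, piRef m n i j * klFun ((π i j + e * E i j) / piRef m n i j) := fun e => by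
    have hfrob := frob_add_smul c π E 1 e
    have hrow := rowSum_add_smul π E 1 e
    rw [one_smul] at hfrob hrow
    simp only [Freg, hfrob, hrow, KLvec_eq_sum_klFun hs,
      KLmat_eq_sum_klFun fun i j => (piRef_pos i j).ne', one_mul, one_smul, Pi.add_apply,
      Pi.smul_apply, Matrix.add_apply, Matrix.smul_apply, smul_eq_mul]
  simp only [hline, hsplit]
  refine HasDerivAt.add (HasDerivAt.add ?_ (HasDerivAt.const_mul _ ?_)) (HasDerivAt.const_mul _ ?_)
  · simpa using ((hasDerivAt_id (0 : ℝ)).mul_const (frob c E)).const_add (frob c π)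
  · exact HasDerivAt.fun_sum fun i _ => hasDerivAt_mul_klFun_div (hs i) (hr i) _
  · exact HasDerivAt.fun_sum fun i _ => HasDerivAt.fun_sum fun j _ =>
      hasDerivAt_mul_klFun_div (piRef_pos i j).ne' (hπ i j) _

lemma rowSum_pos [NeZero n] (hπ : ∀ i j, 0 < π i j) (i : Fin m) : 0 < rowSum π i :=
  sum_pos (fun j _ => hπ i j) univ_nonempty

lemma frob_fregGrad_eq_zero [NeZero n] (hs : ∀ i, 0 < s i) (hπ : π ∈ GammaStar q)
    (hπ_pos : ∀ i j, 0 < π i j) (hmin : IsMinOn (Freg c s α β) (GammaStar q) π)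
    {E : Matrix (Fin m) (Fin n) ℝ} (hE : colSum E = 0) : frob (fregGrad c s α β π) E = 0 := by
  have hmem : ∀ᶠ e : ℝ in 𝓝 0, π + e • E ∈ GammaStar q := by
    have hnonneg : ∀ᶠ e : ℝ in 𝓝 0, ∀ i j, 0 < π i j + e * E i j :=
      eventually_all.2 fun i => eventually_all.2 fun j =>
        (Continuous.tendsto' (by fun_prop) 0 (π i j) (by simp)).eventually_const_lt (hπ_pos i j)
    filter_upwards [hnonneg] with e he
    refine ⟨fun i j => (he i j).le, ?_⟩
    simpa [hE, hπ.2] using colSum_add_smul π E 1 e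
  have hlocal : IsLocalMin (fun e : ℝ => Freg c s α β (π + e • E)) 0 := by
    filter_upwards [hmem] with e he
    simpa using isMinOn_iff.1 hmin _ he
  exact hlocal.hasDerivAt_eq_zero (hasDerivAt_Freg (fun i => (hs i).ne')
    (fun i j => (hπ_pos i j).ne') (fun i => (rowSum_pos hπ_pos i).ne') E)

lemma fregGrad_eq_of_isMinOn [NeZero n] (hs : ∀ i, 0 < s i) (hπ : π ∈ GammaStar q)
    (hπ_pos : ∀ i j, 0 < π i j) (hmin : IsMinOn (Freg c s α β) (GammaStar q) π)
    (i k : Fin m) (j : Fin n) : fregGrad c s α β π i j = fregGrad c s α β π k j := by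
  have hE : colSum ((1 : ℝ) • single i j (1 : ℝ) + (-1 : ℝ) • single k j (1 : ℝ)) = 0 := by
    ext l
    simp [colSum, single_apply, ite_and, sum_add_distrib]
  have hgrad := frob_fregGrad_eq_zero hs hπ hπ_pos hmin hE
  rw [frob_add_smul, frob_single, frob_single] at hgrad
  linarith

lemma exists_potentials_of_isMinOn [NeZero m] [NeZero n] (hs : ∀ i, 0 < s i) (hα : α ≠ 0)
    (hπ : π ∈ GammaStar q) (hπ_pos : ∀ i j, 0 < π i j)
    (hmin : IsMinOn (Freg c s α β) (GammaStar q) π) :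
    ∃ (w : Fin m → ℝ) (v : Fin n → ℝ), (∀ i, rowSum π i = s i * Real.exp (-(α * w i))) ∧
      ∀ i j, w i + v j = c i j + β⁻¹ * Real.log (π i j) := by
  refine ⟨fun i => -(α⁻¹ * Real.log (rowSum π i / s i)),
    fun j => fregGrad c s α β π 0 j + β⁻¹ * Real.log (1 / (m * n)), fun i => ?_, fun i j => ?_⟩
  · rw [mul_neg, neg_neg, mul_inv_cancel_left₀ hα,
      Real.exp_log (div_pos (rowSum_pos hπ_pos i) (hs i)), mul_div_cancel₀ _ (hs i).ne']
  · have hlog : Real.log (π i j / piRef m n i j) = Real.log (π i j) - Real.log (1 / (m * n)) :=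
      Real.log_div (hπ_pos i j).ne' (piRef_pos i j).ne'
    dsimp only
    rw [fregGrad_eq_of_isMinOn hs hπ hπ_pos hmin 0 i j, fregGrad, hlog]
    ring

lemma sum_mul_add_eq_kantorovichDual (π : Matrix (Fin m) (Fin n) ℝ) (f : Fin m → ℝ)
    (g : Fin n → ℝ) :
    ∑ i, ∑ j, π i j * (f i + g j) = kantorovichDual (rowSum π) (colSum π) f g := by
  simp only [kantorovichDual, mul_add, sum_add_distrib, rowSum, colSum, sum_mul]
  rw [sum_comm (f := fun i j => π i j * g j)]

lemma kantorovichDual_rowSum_le (hβ : 0 ≤ β) (hπ : π ∈ GammaStar q) {u w : Fin m → ℝ}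
    {v v' : Fin n → ℝ} (huv : ∀ i j, u i + v j ≤ c i j)
    (hw : ∀ i j, w i + v' j = c i j + β⁻¹ * Real.log (π i j)) :
    kantorovichDual (rowSum π) q u v - m * n * β⁻¹ ≤ kantorovichDual (rowSum π) q w v' := by
  have hentry : ∀ i j, π i j * (u i + v j) - β⁻¹ ≤ π i j * (w i + v' j) := fun i j => by
    have hcost := mul_le_mul_of_nonneg_left (huv i j) (hπ.1 i j)
    have hlog := Real.self_sub_one_le_mul_log (hπ.1 i j)
    have hentropy : -1 ≤ π i j * Real.log (π i j) := by linarith [hπ.1 i j]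
    rw [hw]
    linarith [mul_le_mul_of_nonneg_left hentropy (inv_nonneg.2 hβ)]
  have hsum := sum_le_sum fun i (_ : i ∈ univ) => sum_le_sum fun j (_ : j ∈ univ) => hentry i j
  simp only [sum_sub_distrib, sum_mul_add_eq_kantorovichDual, hπ.2, sum_const, card_univ,
    Fintype.card_fin, nsmul_eq_mul] at hsum
  linarith

end Regularized

/-! ### Debiasing -/

section Debiasing

lemma mul_exp_sub_one_nonneg (x : ℝ) : 0 ≤ x * (Real.exp x - 1) := by
  rcases le_total 0 x with hx | hx
  · exact mul_nonneg hx (sub_nonneg.2 (Real.one_le_exp hx))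
  · exact mul_nonneg_of_nonpos_of_nonpos hx (sub_nonpos.2 (Real.exp_le_one_iff.2 hx))

lemma abs_exp_sub_one_le_abs_mul (x : ℝ) : |Real.exp x - 1| ≤ |x| * (Real.exp x + 1) := by
  have hlow := Real.add_one_le_exp x
  have hexp := Real.exp_pos x
  have hup : Real.exp x * (1 - x) ≤ 1 := by
    have := mul_le_mul_of_nonneg_left (Real.one_sub_le_exp_neg x) hexp.le
    rwa [← Real.exp_add, add_neg_cancel, Real.exp_zero] at this
  rcases le_total 0 x with hx | hx
  · rw [abs_of_nonneg hx, abs_of_nonneg (by linarith)]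
    linarith
  · rw [abs_of_nonpos hx, abs_of_nonpos (sub_nonpos.2 (Real.exp_le_one_iff.2 hx))]
    nlinarith

variable {ι κ : Type*} [Fintype ι] [Fintype κ] {p r : ι → ℝ}

lemma sum_sub_mul_le (hp : ∀ i, 0 ≤ p i) (hpr : ∑ i, r i = ∑ i, p i) {u u' w : ι → ℝ}
    {α δ lam : ℝ} (hα : 0 < α) (hr : ∀ i, r i = p i * Real.exp (α * (u i - w i)))
    (hu : ∀ i, |u i - u' i + lam| ≤ δ) :
    ∑ i, (r i - p i) * (w i - u' i) ≤ 2 * δ * ∑ i, p i := by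
  have hentry : ∀ i, (r i - p i) * (w i - u' i) ≤ (r i + p i) * δ - (r i - p i) * lam := fun i => by
    have hopposite : (r i - p i) * (w i - u i) ≤ 0 := by
      have := mul_nonneg (hp i) (mul_exp_sub_one_nonneg (α * (u i - w i)))
      rw [hr]
      nlinarith
    have hr_nonneg : 0 ≤ r i := hr i ▸ mul_nonneg (hp i) (Real.exp_nonneg _)
    have hδ := abs_le.1 (hu i)
    linarith [mul_le_mul_of_nonneg_left hδ.2 hr_nonneg, mul_le_mul_of_nonneg_left hδ.1 (hp i)]
  have hsum := sum_le_sum fun i (_ : i ∈ univ) => hentry i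
  simp only [sum_sub_distrib, ← sum_mul, sum_add_distrib, hpr, sub_self, zero_mul] at hsum
  linarith

lemma kantorovichDual_le_of_debiased {q : κ → ℝ} (hp : ∀ i, 0 ≤ p i) (hp₁ : ∑ i, p i = 1)
    (hr₁ : ∑ i, r i = 1) {u u' w : ι → ℝ} {v v' : κ → ℝ} {α δ lam γ : ℝ} (hα : 0 < α)
    (hr : ∀ i, r i = p i * Real.exp (α * (u i - w i))) (hu : ∀ i, |u i - u' i + lam| ≤ δ)
    (hopt : kantorovichDual r q u' v' - γ ≤ kantorovichDual r q w v) :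
    kantorovichDual p q u' v' - (γ + 2 * δ) ≤ kantorovichDual p q w v := by
  have hle := sum_sub_mul_le hp (hr₁.trans hp₁.symm) hα hr hu
  simp only [hp₁, sub_mul, mul_sub, sum_sub_distrib] at hle
  unfold kantorovichDual at hopt ⊢
  linarith

lemma abs_le_of_sum_mul_exp_eq (hp : ∀ i, 0 < p i) {x : ι → ℝ} {a η : ℝ}
    (hsum : ∑ i, p i * Real.exp (x i) = ∑ i, p i) (hx : ∀ i, |x i - a| ≤ η) (i : ι) :
    |x i| ≤ 2 * η := by
  have hne : (univ : Finset ι).Nonempty := ⟨i, mem_univ i⟩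
  obtain ⟨k, -, hk⟩ := exists_le_of_sum_le hne hsum.le
  obtain ⟨l, -, hl⟩ := exists_le_of_sum_le hne hsum.ge
  have hk : x k ≤ 0 := Real.exp_le_one_iff.1 ((mul_le_iff_le_one_right (hp k)).1 hk)
  have hl : 0 ≤ x l := Real.one_le_exp_iff.1 ((le_mul_iff_one_le_right (hp l)).1 hl)
  have hi := abs_le.1 (hx i)
  exact abs_le.2 ⟨by linarith [abs_le.1 (hx l)], by linarith [abs_le.1 (hx k)]⟩

lemma sum_abs_mul_exp_sub_le (hp : ∀ i, 0 < p i) {x : ι → ℝ} {a η : ℝ}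
    (hsum : ∑ i, p i * Real.exp (x i) = ∑ i, p i) (hx : ∀ i, |x i - a| ≤ η) :
    ∑ i, |p i * Real.exp (x i) - p i| ≤ 4 * η * ∑ i, p i := by
  calc ∑ i, |p i * Real.exp (x i) - p i|
      ≤ ∑ i, 2 * η * (p i * Real.exp (x i) + p i) := sum_le_sum fun i _ => by
        have hfactor : p i * Real.exp (x i) - p i = p i * (Real.exp (x i) - 1) := by ring
        rw [hfactor, abs_mul, abs_of_pos (hp i)]
        have hexp := (abs_exp_sub_one_le_abs_mul (x i)).trans (mul_le_mul_of_nonneg_right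
          (abs_le_of_sum_mul_exp_eq hp hsum hx i) (by positivity))
        linarith [mul_le_mul_of_nonneg_left hexp (hp i).le]
    _ = 4 * η * ∑ i, p i := by
        rw [← mul_sum, sum_add_distrib, hsum]
        ring

/-- The debiased marginal `p̃ = Z⁻¹ e^{α u} ⊙ p` with `Z = ‖e^{α u} ⊙ p‖₁`; the `ℓ¹` norm is
written as a plain sum, `p` being nonnegative. -/
def debiasedMarginal (p : ι → ℝ) (α : ℝ) (u : ι → ℝ) : ι → ℝ := fun i =>
  Real.exp (α * u i) * p i / ∑ k, Real.exp (α * u k) * p k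

lemma exists_debiasedMarginal_eq [Nonempty ι] (hp : ∀ i, 0 < p i) {α : ℝ} (hα : α ≠ 0)
    (u : ι → ℝ) : ∃ a : ℝ, ∀ i, debiasedMarginal p α u i = p i * Real.exp (α * (u i - a)) := by
  set Z := ∑ k, Real.exp (α * u k) * p k with hZ
  have hZ_pos : 0 < Z := sum_pos (fun k _ => mul_pos (Real.exp_pos _) (hp k)) univ_nonempty
  refine ⟨α⁻¹ * Real.log Z, fun i => ?_⟩
  rw [debiasedMarginal, ← hZ, mul_sub, mul_inv_cancel_left₀ hα, Real.exp_sub, Real.exp_log hZ_pos]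
  ring

end Debiasing

section Main

variable {m n : ℕ} {p : Fin m → ℝ} {q : Fin n → ℝ} {c : Matrix (Fin m) (Fin n) ℝ}

lemma neZero_of_mem_simplexPos {k : ℕ} {p : Fin k → ℝ} (hp : p ∈ simplexPos k) : NeZero k :=
  ⟨by rintro rfl; simpa using hp.2⟩

lemma exists_almost_optimal_of_isMinOn (hp : p ∈ simplexPos m) (hq : q ∈ simplexPos n)
    {α β : ℝ} (hα : 0 < α) (hβ : 0 < β) {u u' : Fin m → ℝ} {v' : Fin n → ℝ} {δ lam : ℝ}
    (hfeas : ∀ i j, u' i + v' j ≤ c i j) (hu : ∀ i, |u i - u' i + lam| ≤ δ)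
    {π : Matrix (Fin m) (Fin n) ℝ} (hπ : π ∈ GammaStar q)
    (hmin : IsMinOn (Freg c (debiasedMarginal p α u) α β) (GammaStar q) π) :
    ∃ (w : Fin m → ℝ) (v : Fin n → ℝ) (a : ℝ), (∀ i j, w i + v j ≤ c i j) ∧
      (∀ i, rowSum π i = p i * Real.exp (α * (u i - a - w i))) ∧
      kantorovichDual p q u' v' - (m * n * β⁻¹ + 2 * δ) ≤ kantorovichDual p q w v := by
  have := neZero_of_mem_simplexPos hp
  have := neZero_of_mem_simplexPos hq
  obtain ⟨a, ha⟩ := exists_debiasedMarginal_eq hp.1 hα.ne' u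
  have hs : ∀ i, 0 < debiasedMarginal p α u i := fun i =>
    ha i ▸ mul_pos (hp.1 i) (Real.exp_pos _)
  have hπ_pos := pos_of_isMinOn_Freg hs hq.1 hα.le hβ hπ hmin
  obtain ⟨w, v, hrow, hwv⟩ := exists_potentials_of_isMinOn hs hα.ne' hπ hπ_pos hmin
  have hrow' : ∀ i, rowSum π i = p i * Real.exp (α * (u i - a - w i)) := fun i => by
    rw [hrow, ha, mul_assoc, ← Real.exp_add]
    ring_nf
  refine ⟨w, v, a, fun i j => ?_, hrow', ?_⟩
  · have hle_one : π i j ≤ 1 := (le_of_mem_GammaStar hπ i j).trans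
      (hq.2 ▸ single_le_sum (fun j _ => (hq.1 j).le) (mem_univ j))
    rw [hwv]
    linarith [mul_nonpos_of_nonneg_of_nonpos (inv_nonneg.2 hβ.le)
      (Real.log_nonpos (hπ.1 i j) hle_one)]
  · exact kantorovichDual_le_of_debiased (lam := lam + a) (fun i => (hp.1 i).le) hp.2
      (by rw [sum_rowSum_eq_sum_colSum, hπ.2, hq.2]) hα hrow'
      (fun i => by convert hu i using 2; ring) (kantorovichDual_rowSum_le hβ.le hπ hfeas hwv)

lemma l1vec_rowSum_sub_le (hp : p ∈ simplexPos m) (hq : q ∈ simplexPos n) {α : ℝ} (hα : 0 < α)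
    {π : Matrix (Fin m) (Fin n) ℝ} (hπ : π ∈ GammaStar q) {x : Fin m → ℝ}
    (hrow : ∀ i, rowSum π i = p i * Real.exp (α * x i)) {a η : ℝ} (hx : ∀ i, |x i - a| ≤ η) :
    l1vec (fun i => rowSum π i - p i) ≤ 4 * η * α := by
  have hsum : ∑ i, p i * Real.exp (α * x i) = ∑ i, p i := by
    rw [← sum_congr rfl fun i _ => hrow i, sum_rowSum_eq_sum_colSum, hπ.2, hp.2, hq.2]
  have hscaled : ∀ i, |α * x i - α * a| ≤ α * η := fun i => by
    rw [← mul_sub, abs_mul, abs_of_pos hα]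
    exact mul_le_mul_of_nonneg_left (hx i) hα.le
  have hle := sum_abs_mul_exp_sub_le hp.1 hsum hscaled
  simp only [l1vec, hrow]
  rw [hp.2] at hle
  linarith

lemma exists_forall_abs_add_lt {ι : Type*} [Finite ι] {f : ι → ℝ} {δ : ℝ}
    (h : ⨅ lam : ℝ, ⨆ i, |f i + lam| < δ) : ∃ lam : ℝ, ∀ i, |f i + lam| < δ := by
  obtain ⟨lam, hlam⟩ := exists_lt_of_ciInf_lt h
  exact ⟨lam, fun i => (le_ciSup (f := fun i => |f i + lam|)
    (Set.finite_range _).bddAbove i).trans_lt hlam⟩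

theorem asymptotic_debiasing_general {T : Type*} {l : Filter T}
    (hp : p ∈ simplexPos m) (hq : q ∈ simplexPos n) {uinf : Fin m → ℝ} {vinf : Fin n → ℝ}
    (hK : IsUniqueKantorovichPair p q c uinf vinf) {α β : T → ℝ} (hβ : Tendsto β l atTop)
    (hα : ∀ᶠ t in l, 0 < α t) {u : T → Fin m → ℝ}
    (hu : Tendsto (fun t => ⨅ lam : ℝ, ⨆ i, |u t i - uinf i + lam|) l (𝓝 0))
    {πreg : T → Matrix (Fin m) (Fin n) ℝ} (hmem : ∀ᶠ t in l, πreg t ∈ GammaStar q)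
    (hmin : ∀ᶠ t in l,
      IsMinOn (Freg c (debiasedMarginal p (α t) (u t)) (α t) (β t)) (GammaStar q) (πreg t)) :
    Tendsto (fun t => l1vec (fun i => rowSum (πreg t) i - p i) / α t) l (𝓝 0) := by
  have hl1_nonneg : ∀ t, 0 ≤ l1vec (fun i => rowSum (πreg t) i - p i) := fun t =>
    sum_nonneg fun i _ => abs_nonneg _
  refine Metric.tendsto_nhds.2 fun ε hε => ?_
  obtain ⟨η, hη, hstable⟩ :=
    hK.exists_shift_of_almost_optimal hp.1 hp.2 hq.1 hq.2 (show 0 < ε / 16 by positivity)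
  have hentropy : Tendsto (fun t => (m : ℝ) * n * (β t)⁻¹) l (𝓝 0) := by
    simpa using (tendsto_inv_atTop_zero.comp hβ).const_mul ((m : ℝ) * n)
  filter_upwards [hα, hβ.eventually_gt_atTop 0, hmem, hmin,
    hentropy.eventually_lt_const (half_pos hη),
    hu.eventually_lt_const (show 0 < min (ε / 16) (η / 4) by positivity)] with
    t hαt hβt hmemt hmint hentropyt hut
  obtain ⟨lam, hlam⟩ := exists_forall_abs_add_lt hut
  obtain ⟨w, v, a, hfeas, hrow, hval⟩ := exists_almost_optimal_of_isMinOn hp hq hαt hβt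
    hK.feasible (fun i => (hlam i).le) hmemt hmint
  obtain ⟨mu, hmu⟩ := hstable w v hfeas (by linarith [min_le_right (ε / 16) (η / 4)])
  have hshift : ∀ i, |u t i - a - w i - (-lam - mu - a)| ≤ ε / 8 := fun i => by
    have hui := abs_lt.1 ((hlam i).trans_le (min_le_left _ _))
    have hwi := abs_lt.1 (hmu i)
    exact abs_le.2 ⟨by linarith, by linarith⟩
  have hbound := l1vec_rowSum_sub_le hp hq hαt hmemt hrow hshift
  rw [Real.dist_eq, sub_zero, abs_of_nonneg (div_nonneg (hl1_nonneg t) hαt.le), div_lt_iff₀ hαt]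
  linarith [mul_pos hε hαt]

end Main

/-- Proposition 2: asymptotic debiasing.
If `OT(p,q)` has a unique pair of Kantorovich potentials `(u∞,v∞)` up to translation,
`β_t → ∞`, `α_t = β_t - β_{t-1} > 0` with `α_t → 0`, and `u_t → u∞` up to constant shifts,
then the regularization path computed with `p` replaced by the debiased marginal
`p̃_t = Z_t⁻¹ e^{α_t u_t} ⊙ p` satisfies `‖π̃^reg_t 𝟙 - p‖₁ = o(α_t)`. -/
theorem asymptotic_debiasing
    {m n : ℕ} (p : Fin m → ℝ) (q : Fin n → ℝ) (c : Matrix (Fin m) (Fin n) ℝ)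
    (hp : p ∈ simplexPos m) (hq : q ∈ simplexPos n)
    (uinf : Fin m → ℝ) (vinf : Fin n → ℝ)
    (hfeas : ∀ i j, uinf i + vinf j ≤ c i j)
    (hopt : ∀ (u : Fin m → ℝ) (v : Fin n → ℝ), (∀ i j, u i + v j ≤ c i j) →
      ∑ i, p i * u i + ∑ j, q j * v j ≤ ∑ i, p i * uinf i + ∑ j, q j * vinf j)
    (huniq : ∀ (u : Fin m → ℝ) (v : Fin n → ℝ), (∀ i j, u i + v j ≤ c i j) →
      ∑ i, p i * u i + ∑ j, q j * v j = ∑ i, p i * uinf i + ∑ j, q j * vinf j →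
      ∃ lam : ℝ, u = (fun i => uinf i + lam) ∧ v = (fun j => vinf j - lam))
    (β : ℕ → ℝ) (hβtop : Tendsto β atTop atTop)
    (α : ℕ → ℝ) (hαdef : ∀ t : ℕ, 1 ≤ t → α t = β t - β (t - 1))
    (hαpos : ∀ t : ℕ, 1 ≤ t → 0 < α t) (hα0 : Tendsto α atTop (𝓝 0))
    (u : ℕ → Fin m → ℝ)
    (hu : Tendsto (fun t => ⨅ lam : ℝ, ⨆ i, |u t i - uinf i + lam|) atTop (𝓝 0))
    (ptil : ℕ → Fin m → ℝ)
    (hptil : ∀ t i, ptil t i =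
      Real.exp (α t * u t i) * p i / (∑ i', Real.exp (α t * u t i') * p i'))
    (πreg : ℕ → Matrix (Fin m) (Fin n) ℝ)
    (hπregmem : ∀ t : ℕ, 1 ≤ t → πreg t ∈ GammaStar q)
    (hπregopt : ∀ t : ℕ, 1 ≤ t → ∀ π' ∈ GammaStar (m := m) q,
      Freg c (ptil t) (α t) (β t) (πreg t) ≤ Freg c (ptil t) (α t) (β t) π') :
    Tendsto (fun t => l1vec (fun i => rowSum (πreg t) i - p i) / α t) atTop (𝓝 0) := by
  obtain rfl : ptil = fun t => debiasedMarginal p (α t) (u t) := funext₂ hptil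
  exact asymptotic_debiasing_general hp hq ⟨hfeas, hopt, huniq⟩ hβtop
    (eventually_atTop.2 ⟨1, hαpos⟩) hu (eventually_atTop.2 ⟨1, hπregmem⟩)
    (eventually_atTop.2 ⟨1, hπregopt⟩)

end
end
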